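/- Let K ⊂ ℂ be compact, connected, and full, and let z ∈ ∂K. For every access to z there exists a curve γ : [0,1) → ℂ∖K landing at z that runs entirely through the domains V_r defining the access and visits all of them; moreover two such curves (for the same access), together with z, never separate K. -/

import Mathlib

open Set Metric Filter Topology

/-- An access to a boundary point `z` of `K`: a choice, for every Euclidean disk of
radius `r` around `z`, of a connected component `V r` of `ball z r ∖ K`, nested so that
`V r ⊆ V s` whenever `r < s`. -/
def IsAccess (K : Set ℂ) (z : ℂ) (V : ℝ → Set ℂ) : Prop :=
  (∀ r : ℝ, 0 < r → ∃ x ∈ Metric.ball z r \ K,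
      V r = connectedComponentIn (Metric.ball z r \ K) x) ∧
  (∀ r s : ℝ, 0 < r → r < s → V r ⊆ V s)

/-- A curve `γ : [0,1) → ℂ ∖ K` landing at `z` which runs entirely through the domains
`V r` of an access and eventually enters each of them. -/
def IsCurveInAccess (K : Set ℂ) (z : ℂ) (V : ℝ → Set ℂ) (γ : ℝ → ℂ) : Prop :=
  ContinuousOn γ (Set.Ico 0 1) ∧ (∀ t ∈ Set.Ico (0:ℝ) 1, γ t ∉ K) ∧
  Filter.Tendsto γ (nhdsWithin 1 (Set.Iio 1)) (nhds z) ∧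
  (∀ t ∈ Set.Ico (0:ℝ) 1, ∃ r : ℝ, 0 < r ∧ γ t ∈ V r) ∧
  (∀ r : ℝ, 0 < r → ∃ t₀ ∈ Set.Ico (0:ℝ) 1, ∀ t, t₀ ≤ t → t < 1 → γ t ∈ V r)

/-!
The curve is obtained by joining points of the shrinking path connected domains `V (1 / (n + 1))`.

For the second assertion, by Eilenberg's criterion it is enough that `f w = (w - a) / (w - b)` has a
continuous logarithm on the compact set formed by the two curves and `z`. Since `a` and `b` lie in
the connected set `K`, `f` has a logarithm on every compact subset of `Kᶜ`, hence on the component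
of `Kᶜ` containing both curves; since `a, b ≠ z`, it also has one on a small disk around `z`. These
two logarithms differ by a constant on the connected domain `V r` inside that disk. Both curves end
up in this same `V r`, so the first logarithm has the same limit at `z` along either of them.
-/

/-- `f` has a continuous branch of the logarithm on `S`, so that it does not wind around `0` along
loops in `S`. The branch is a total function, with arbitrary values outside `S`. -/
def HasLogOn {X : Type*} [TopologicalSpace X] (f : X → ℂ) (S : Set X) : Prop :=
  ∃ L : X → ℂ, ContinuousOn L S ∧ ∀ x ∈ S, Complex.exp (L x) = f x

section HasLogOn

variable {X : Type*} [TopologicalSpace X] {f g : X → ℂ} {S T U V Ω : Set X}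

theorem HasLogOn.mul (hf : HasLogOn f S) (hg : HasLogOn g S) :
    HasLogOn (fun x => f x * g x) S := by
  obtain ⟨L, hL, hLf⟩ := hf
  obtain ⟨M, hM, hMg⟩ := hg
  exact ⟨fun x => L x + M x, hL.add hM, fun x hx => by rw [Complex.exp_add, hLf x hx, hMg x hx]⟩

theorem HasLogOn.inv (hf : HasLogOn f S) : HasLogOn (fun x => (f x)⁻¹) S := by
  obtain ⟨L, hL, hLf⟩ := hf
  exact ⟨fun x => -L x, hL.neg, fun x hx => by rw [Complex.exp_neg, hLf x hx]⟩

theorem HasLogOn.congr (hf : HasLogOn f S) (h : EqOn f g S) : HasLogOn g S := by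
  obtain ⟨L, hL, hLf⟩ := hf
  exact ⟨L, hL, fun x hx => (hLf x hx).trans (h hx)⟩

theorem HasLogOn.mono (hf : HasLogOn f S) (h : T ⊆ S) : HasLogOn f T := by
  obtain ⟨L, hL, hLf⟩ := hf
  exact ⟨L, hL.mono h, fun x hx => hLf x (h hx)⟩

theorem HasLogOn.ne_zero (hf : HasLogOn f S) {x : X} (hx : x ∈ S) : f x ≠ 0 := by
  obtain ⟨L, -, hLf⟩ := hf
  exact hLf x hx ▸ Complex.exp_ne_zero _

theorem HasLogOn.of_norm_sub_one_lt (hf : ContinuousOn f S) (h : ∀ x ∈ S, ‖f x - 1‖ < 1) :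
    HasLogOn f S := by
  have hslit : ∀ x ∈ S, f x ∈ Complex.slitPlane := fun x hx => by
    simpa only [add_sub_cancel] using Complex.mem_slitPlane_of_norm_lt_one (h x hx)
  exact ⟨fun x => Complex.log (f x), hf.clog hslit,
    fun x hx => Complex.exp_log (Complex.slitPlane_ne_zero (hslit x hx))⟩

theorem isLocalHomeomorph_complex_exp : IsLocalHomeomorph Complex.exp :=
  isLocalHomeomorph_iff_isLocalHomeomorphOn_univ.2 <|
    Complex.isCoveringMapOn_exp.isLocalHomeomorphOn.mono fun z _ => Complex.exp_ne_zero z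

theorem sub_eq_sub_of_exp_eq_exp (hS : IsPreconnected S) {L M : X → ℂ} (hL : ContinuousOn L S)
    (hM : ContinuousOn M S) (h : ∀ x ∈ S, Complex.exp (L x) = Complex.exp (M x)) {x y : X}
    (hx : x ∈ S) (hy : y ∈ S) : L x - M x = L y - M y := by
  have hexp : ∀ x ∈ S, Complex.exp (L x - M x) = 1 := fun x hx => by
    rw [Complex.exp_sub, h x hx, div_self (Complex.exp_ne_zero _)]
  exact (T2Space.isSeparatedMap Complex.exp).constOn_of_comp
    isLocalHomeomorph_complex_exp.isLocallyInjective hS (hL.sub hM)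
    (fun a ha b hb => (hexp a ha).trans (hexp b hb).symm) hx hy

theorem HasLogOn.exists_continuousMap_exp_eq (hf : HasLogOn f S) {γ : C(unitInterval, X)}
    (hγ : ∀ t, γ t ∈ S) {e₀ : ℂ} (he₀ : Complex.exp e₀ = f (γ 0)) :
    ∃ Γ : C(unitInterval, ℂ), Γ 0 = e₀ ∧ ∀ t, Complex.exp (Γ t) = f (γ t) := by
  obtain ⟨L, hL, hLf⟩ := hf
  refine ⟨⟨fun t => L (γ t) - L (γ 0) + e₀,
    ((hL.comp_continuous γ.continuous hγ).sub continuous_const).add continuous_const⟩,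
    by simp, fun t => ?_⟩
  change Complex.exp (L (γ t) - L (γ 0) + e₀) = f (γ t)
  rw [Complex.exp_add, Complex.exp_sub, he₀, ← hLf _ (hγ 0), hLf _ (hγ t),
    div_mul_cancel₀ _ (Complex.exp_ne_zero _)]

theorem HasLogOn.apply_one_eq_of_exp_eq (hf : HasLogOn f S) {γ γ' : C(unitInterval, X)}
    (hγ : ∀ t, γ t ∈ S) (hγ' : ∀ t, γ' t ∈ S) {Γ Γ' : C(unitInterval, ℂ)}
    (hΓ : ∀ t, Complex.exp (Γ t) = f (γ t)) (hΓ' : ∀ t, Complex.exp (Γ' t) = f (γ' t))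
    (h₀ : γ 0 = γ' 0) (hΓ₀ : Γ 0 = Γ' 0) (h₁ : γ 1 = γ' 1) : Γ 1 = Γ' 1 := by
  obtain ⟨L, hL, hLf⟩ := hf
  have hconst : ∀ (δ : C(unitInterval, X)) (Δ : C(unitInterval, ℂ)), (∀ t, δ t ∈ S) →
      (∀ t, Complex.exp (Δ t) = f (δ t)) → Δ 1 - L (δ 1) = Δ 0 - L (δ 0) := fun δ Δ hδ hΔ =>
    sub_eq_sub_of_exp_eq_exp isPreconnected_univ (M := fun t => L (δ t)) Δ.continuous.continuousOn
      (hL.comp_continuous δ.continuous hδ).continuousOn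
      (fun t _ => by rw [hΔ, hLf _ (hδ t)]) (mem_univ 1) (mem_univ 0)
  have hγΓ := hconst γ Γ hγ hΓ
  have hγΓ' := hconst γ' Γ' hγ' hΓ'
  rw [← h₀, ← h₁, ← hΓ₀] at hγΓ'
  linear_combination hγΓ - hγΓ'

theorem exists_continuous_exp_eq_of_forall_isCompact [PathConnectedSpace X]
    [LocallyPathConnectedSpace X] (hf : Continuous f) (h : ∀ C, IsCompact C → HasLogOn f C) :
    ∃ L : X → ℂ, Continuous L ∧ ∀ x, Complex.exp (L x) = f x := by
  let x₀ : X := Classical.arbitrary X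
  have hx₀ : Complex.exp (Complex.log (f x₀)) = f x₀ :=
    Complex.exp_log ((h {x₀} isCompact_singleton).ne_zero rfl)
  obtain ⟨L, ⟨-, hL⟩, -⟩ := isLocalHomeomorph_complex_exp.existsUnique_continuousMap_lifts
    ⟨f, hf⟩ x₀ _ hx₀
    (fun γ hγ => by
      obtain ⟨Γ, hΓ₀, hΓ⟩ := (h _ (isCompact_range γ.continuous)).exists_continuousMap_exp_eq
        mem_range_self (hx₀.trans (congr_arg f hγ.symm))
      exact ⟨Γ, hΓ₀, funext hΓ⟩)
    (fun γ γ' Γ Γ' hγ hγ' hΓ₀ hΓ₀' hΓ hΓ' h₁ =>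
      (h _ ((isCompact_range γ.continuous).union
        (isCompact_range γ'.continuous))).apply_one_eq_of_exp_eq
        (fun t => .inl (mem_range_self t)) (fun t => .inr (mem_range_self t))
        (congr_fun hΓ) (congr_fun hΓ') (hγ.trans hγ'.symm) (hΓ₀.trans hΓ₀'.symm) h₁)
  exact ⟨L, L.continuous, congr_fun hL⟩

theorem HasLogOn.of_forall_isCompact [LocallyPathConnectedSpace X] (hΩo : IsOpen Ω)
    (hΩ : IsPathConnected Ω) (hf : ContinuousOn f Ω)
    (h : ∀ C ⊆ Ω, IsCompact C → HasLogOn f C) : HasLogOn f Ω := by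
  have := isPathConnected_iff_pathConnectedSpace.1 hΩ
  have := hΩo.locallyPathConnectedSpace
  obtain ⟨L, hL, hLf⟩ := exists_continuous_exp_eq_of_forall_isCompact
    (continuousOn_iff_continuous_domRestrict.1 hf) fun C hC => by
      obtain ⟨M, hM, hMf⟩ := h _ (Subtype.coe_image_subset Ω C) (hC.image continuous_subtype_val)
      exact ⟨M ∘ (↑), hM.comp continuous_subtype_val.continuousOn (mapsTo_image _ C),
        fun x hx => hMf x (mem_image_of_mem _ hx)⟩
  refine ⟨Function.extend (↑) L 0, ?_, fun x hx => ?_⟩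
  · rw [continuousOn_iff_continuous_domRestrict]
    convert! hL
    ext x
    exact Subtype.val_injective.extend_apply L 0 x
  · exact (congr_arg _ (Subtype.val_injective.extend_apply L 0 ⟨x, hx⟩)).trans (hLf ⟨x, hx⟩)

theorem exists_tendsto_of_exp_eq (hV : IsConnected V) (hVU : V ⊆ U) {z : X} (hU : U ∈ 𝓝 z)
    (hf : HasLogOn f U) {L : X → ℂ} (hL : ContinuousOn L V)
    (hLf : ∀ x ∈ V, Complex.exp (L x) = f x) :
    ∃ l, Complex.exp l = f z ∧ Tendsto L (𝓝[V] z) (𝓝 l) := by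
  obtain ⟨M, hM, hMf⟩ := hf
  obtain ⟨x₀, hx₀⟩ := hV.nonempty
  have hexp : ∀ x ∈ V, Complex.exp (L x) = Complex.exp (M x) := fun x hx =>
    (hLf x hx).trans (hMf x (hVU hx)).symm
  have hLM : ∀ x ∈ V, M x + (L x₀ - M x₀) = L x := fun x hx => by
    linear_combination
      sub_eq_sub_of_exp_eq_exp hV.isPreconnected hL (hM.mono hVU) hexp hx₀ hx
  refine ⟨M z + (L x₀ - M x₀), ?_, ?_⟩
  · rw [Complex.exp_add, Complex.exp_sub, hexp x₀ hx₀, div_self (Complex.exp_ne_zero _), mul_one,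
      hMf z (mem_of_mem_nhds hU)]
  · exact (((hM.continuousAt hU).add_const _).mono_left nhdsWithin_le_nhds).congr'
      (eventually_nhdsWithin_of_forall hLM)

theorem HasLogOn.insert [T1Space X] (hΩ : HasLogOn f Ω) (hU : HasLogOn f U) {z : X}
    (hUz : U ∈ 𝓝 z) (hV : IsConnected V) (hVΩ : V ⊆ Ω) (hVU : V ⊆ U) (hTΩ : T ⊆ Ω) (hzT : z ∉ T)
    (hTV : 𝓝[T] z ≤ 𝓝[V] z) : HasLogOn f (insert z T) := by
  classical
  obtain ⟨L, hL, hLf⟩ := hΩ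
  obtain ⟨l, hl, hlim⟩ :=
    exists_tendsto_of_exp_eq hV hVU hUz hU (hL.mono hVΩ) fun x hx => hLf x (hVΩ hx)
  refine ⟨Function.update L z l, ?_, ?_⟩
  · rw [continuousOn_update_iff, insert_sdiff_self_of_notMem hzT]
    exact ⟨hL.mono hTΩ, fun _ => hlim.mono_left hTV⟩
  · rintro x (rfl | hx)
    · rwa [Function.update_self]
    · rw [Function.update_of_ne (ne_of_mem_of_not_mem hx hzT), hLf x (hTΩ hx)]

end HasLogOn

section Components

theorem frontier_connectedComponentIn_subset_compl {X : Type*} [TopologicalSpace X]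
    [LocallyConnectedSpace X] {U : Set X} (hU : IsOpen U) (x : X) :
    frontier (connectedComponentIn U x) ⊆ Uᶜ := by
  intro y hy hyU
  rw [hU.connectedComponentIn.frontier_eq] at hy
  obtain ⟨w, hwy, hwx⟩ := mem_closure_iff.1 hy.1 _ hU.connectedComponentIn
    (mem_connectedComponentIn hyU)
  apply hy.2
  rw [connectedComponentIn_eq hwx, ← connectedComponentIn_eq hwy]
  exact mem_connectedComponentIn hyU

variable {E : Type*} [NormedAddCommGroup E] [NormedSpace ℝ E]

theorem isPreconnected_compl_closedBall (hE : 1 < Module.rank ℝ E) (x : E) (r : ℝ) :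
    IsPreconnected (closedBall x r)ᶜ := by
  rcases lt_or_ge r 0 with hr | hr
  · simpa only [closedBall_eq_empty.2 hr, compl_empty] using
      (PreconnectedSpace.isPreconnected_univ : IsPreconnected (univ : Set E))
  have himage : (closedBall x r)ᶜ = (fun p : ℝ × E => x + p.1 • p.2) '' (Ioi r ×ˢ sphere 0 1) := by
    ext y
    simp only [mem_compl_iff, mem_closedBall_iff_norm, not_le, mem_image, mem_prod, mem_Ioi,
      mem_sphere_zero_iff_norm, Prod.exists]
    constructor
    · intro hy
      have hy₀ : ‖y - x‖ ≠ 0 := (hr.trans_lt hy).ne'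
      exact ⟨‖y - x‖, ‖y - x‖⁻¹ • (y - x), ⟨hy, by simp [norm_smul, hy₀]⟩, by simp [hy₀]⟩
    · rintro ⟨s, v, ⟨hs, hv⟩, rfl⟩
      rwa [add_sub_cancel_left, norm_smul, hv, mul_one, Real.norm_of_nonneg (hr.trans hs.le)]
  rw [himage]
  exact (isPreconnected_Ioi.prod (isPreconnected_sphere hE 0 1)).image _ (by fun_prop)

theorem connectedComponentIn_compl_eq_of_not_isBounded (hE : 1 < Module.rank ℝ E) {C : Set E}
    (hC : Bornology.IsBounded C) {a b : E}
    (ha : ¬ Bornology.IsBounded (connectedComponentIn Cᶜ a))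
    (hb : ¬ Bornology.IsBounded (connectedComponentIn Cᶜ b)) :
    connectedComponentIn Cᶜ a = connectedComponentIn Cᶜ b := by
  obtain ⟨R, hCR⟩ := hC.subset_closedBall 0
  obtain ⟨x, hxa, hxR⟩ := not_subset.1 fun h => ha (isBounded_closedBall.subset h)
  obtain ⟨y, hyb, hyR⟩ := not_subset.1 fun h => hb (isBounded_closedBall.subset h)
  have hyx : y ∈ connectedComponentIn Cᶜ x :=
    (isPreconnected_compl_closedBall hE 0 R).subset_connectedComponentIn hxR
      (compl_subset_compl.2 hCR) hyR
  rw [connectedComponentIn_eq hxa, connectedComponentIn_eq hyx, ← connectedComponentIn_eq hyb]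

end Components

section Eilenberg

theorem not_hasLogOn_sub_sphere (c : ℂ) {R : ℝ} (hR : 0 < R) :
    ¬ HasLogOn (fun w => w - c) (sphere c R) := by
  rintro ⟨L, hL, hLf⟩
  have hexp : ∀ θ : ℝ, Complex.exp (L (circleMap c R θ)) =
      Complex.exp (Real.log R + θ * Complex.I) := fun θ => by
    rw [hLf _ (circleMap_mem_sphere c hR.le θ)]
    beta_reduce
    rw [circleMap_sub_center, circleMap_zero,
      Complex.exp_add, ← Complex.ofReal_exp, Real.exp_log hR]
  have hcont : Continuous fun θ => L (circleMap c R θ) :=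
    hL.comp_continuous (continuous_circleMap c R) (circleMap_mem_sphere c hR.le)
  have hturn := sub_eq_sub_of_exp_eq_exp isPreconnected_univ hcont.continuousOn
    (by fun_prop : Continuous fun θ : ℝ => (Real.log R + θ * Complex.I : ℂ)).continuousOn
    (fun θ _ => hexp θ) (mem_univ 0) (mem_univ (2 * Real.pi))
  have hperiod : circleMap c R (2 * Real.pi) = circleMap c R 0 := by
    simpa only [zero_add] using periodic_circleMap c R 0
  rw [hperiod] at hturn
  push_cast at hturn
  exact Complex.two_pi_I_ne_zero (by linear_combination hturn)

theorem exists_eq_zero_of_eqOn_sphere {h : ℂ → ℂ} (hc : Continuous h) {c : ℂ} {R : ℝ}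
    (hR : 0 < R) (hs : EqOn h (fun w => w - c) (sphere c R)) : ∃ w, h w = 0 := by
  by_contra! hne
  obtain ⟨L, ⟨-, hLh⟩, -⟩ := Complex.isCoveringMapOn_exp.existsUnique_continuousMap_lifts
    (⟨h, hc⟩ : C(ℂ, ℂ)) (Complex.exp_log (hne 0)) hne
  have hlog : HasLogOn h (sphere c R) := ⟨L, L.continuous.continuousOn, fun w _ => congr_fun hLh w⟩
  exact not_hasLogOn_sub_sphere c hR (hlog.congr hs)

variable {C : Set ℂ} {a b : ℂ}

theorem mem_connectedComponentIn_compl_of_isBounded (hC : IsClosed C) (ha : a ∉ C) (hb : b ∉ C)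
    (hlog : HasLogOn (fun w => (w - a) / (w - b)) C)
    (hbdd : Bornology.IsBounded (connectedComponentIn Cᶜ a)) :
    b ∈ connectedComponentIn Cᶜ a := by
  classical
  by_contra hbΩ
  set Ω := connectedComponentIn Cᶜ a
  have haΩ : a ∈ Ω := mem_connectedComponentIn ha
  obtain ⟨L, hL, hLf⟩ := hlog
  obtain ⟨M, hM⟩ := ContinuousMap.exists_restrict_eq hC
    ⟨C.domRestrict L, continuousOn_iff_continuous_domRestrict.1 hL⟩
  have hML : ∀ w ∈ C, M w = L w := fun w hw => DFunLike.congr_fun hM ⟨w, hw⟩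
  obtain ⟨R, hR, hΩR⟩ := hbdd.subset_ball_lt 0 a
  -- A zero-free continuous function on the plane that equals `w - a` outside `Ω`.
  let h : ℂ → ℂ := Ω.piecewise (fun w => Complex.exp (M w) * (w - b)) (fun w => w - a)
  have hcont : Continuous h := by
    refine Continuous.piecewise (fun w hw => ?_) (by fun_prop) (by fun_prop)
    have hwC : w ∈ C := by
      simpa only [compl_compl] using frontier_connectedComponentIn_subset_compl hC.isOpen_compl a hw
    rw [hML w hwC, hLf w hwC, div_mul_cancel₀ _ (sub_ne_zero.2 (ne_of_mem_of_not_mem hwC hb))]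
  have hsphere : EqOn h (fun w => w - a) (sphere a R) := fun w hw =>
    piecewise_eq_of_notMem _ _ _ fun hwΩ => (mem_ball.1 (hΩR hwΩ)).ne hw
  obtain ⟨w, hw⟩ := exists_eq_zero_of_eqOn_sphere hcont hR hsphere
  by_cases hwΩ : w ∈ Ω
  · rw [show h w = _ from piecewise_eq_of_mem _ _ _ hwΩ] at hw
    have hwb : w = b := sub_eq_zero.1 ((mul_eq_zero_iff_left (Complex.exp_ne_zero _)).1 hw)
    exact hbΩ (hwb ▸ hwΩ)
  · rw [show h w = _ from piecewise_eq_of_notMem _ _ _ hwΩ] at hw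
    exact hwΩ (sub_eq_zero.1 hw ▸ haΩ)

/-- **Eilenberg's criterion**, sufficiency. -/
theorem connectedComponentIn_compl_eq_of_hasLogOn (hC : IsCompact C) (ha : a ∉ C) (hb : b ∉ C)
    (hlog : HasLogOn (fun w => (w - a) / (w - b)) C) :
    connectedComponentIn Cᶜ a = connectedComponentIn Cᶜ b := by
  by_cases hbdda : Bornology.IsBounded (connectedComponentIn Cᶜ a)
  · exact connectedComponentIn_eq
      (mem_connectedComponentIn_compl_of_isBounded hC.isClosed ha hb hlog hbdda)
  by_cases hbddb : Bornology.IsBounded (connectedComponentIn Cᶜ b)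
  · have hlog' : HasLogOn (fun w => (w - b) / (w - a)) C :=
      hlog.inv.congr fun w _ => inv_div _ _
    exact (connectedComponentIn_eq
      (mem_connectedComponentIn_compl_of_isBounded hC.isClosed hb ha hlog' hbddb)).symm
  exact connectedComponentIn_compl_eq_of_not_isBounded (by simp) hC.isBounded hbdda hbddb

theorem hasLogOn_div_of_dist_lt (hab : ∀ w ∈ C, dist a b < dist w b) :
    HasLogOn (fun w => (w - a) / (w - b)) C := by
  have hne : ∀ w ∈ C, w - b ≠ 0 := fun w hw =>
    sub_ne_zero.2 <| dist_pos.1 <| dist_nonneg.trans_lt (hab w hw)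
  refine .of_norm_sub_one_lt (ContinuousOn.div (by fun_prop) (by fun_prop) hne) fun w hw => ?_
  have hsub : (w - a) / (w - b) - 1 = (b - a) / (w - b) := by
    rw [div_sub_one (hne w hw), sub_sub_sub_cancel_left]
  rw [hsub, norm_div, div_lt_one (norm_pos_iff.2 (hne w hw)), ← dist_eq_norm, ← dist_eq_norm,
    dist_comm b a]
  exact hab w hw

/-- **Eilenberg's criterion**, necessity. -/
theorem hasLogOn_div_of_isPreconnected {K : Set ℂ} (hK : IsPreconnected K) (hC : IsClosed C)
    (hCK : Disjoint C K) (ha : a ∈ K) (hb : b ∈ K) :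
    HasLogOn (fun w => (w - a) / (w - b)) C := by
  refine hK.induction₂ (fun a b => HasLogOn (fun w => (w - a) / (w - b)) C) (fun x hx => ?_)
    (fun x y v _ hy _ hxy hyv => ?_) (fun x y _ _ hxy => ?_) ha hb
  · obtain ⟨ε, hε, hεC⟩ := Metric.mem_nhds_iff.1 <|
      hC.isOpen_compl.mem_nhds (disjoint_right.1 hCK hx)
    filter_upwards [mem_nhdsWithin_of_mem_nhds (ball_mem_nhds x (half_pos hε))] with y hy
    refine hasLogOn_div_of_dist_lt fun w hw => ?_
    have hwx : ε ≤ dist w x := not_lt.1 fun h => hεC h hw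
    have hyx : dist y x < ε / 2 := hy
    linarith [dist_triangle w y x, dist_comm x y]
  · refine (hxy.mul hyv).congr fun w hw => ?_
    exact div_mul_div_cancel₀ (sub_ne_zero.2 (hCK.ne_of_mem hw hy))
  · exact hxy.inv.congr fun w _ => inv_div _ _

theorem exists_hasLogOn_div_closedBall {z : ℂ} (ha : a ≠ z) (hb : b ≠ z) :
    ∃ r > 0, HasLogOn (fun w => (w - a) / (w - b)) (closedBall z r) := by
  obtain ⟨r, hr, hrab⟩ := exists_between (lt_min (dist_pos.2 ha) (dist_pos.2 hb))
  rw [lt_min_iff] at hrab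
  exact ⟨r, hr, hasLogOn_div_of_isPreconnected
    (isPreconnected_compl_closedBall (by simp) z r) isClosed_closedBall disjoint_compl_right
    (not_le.2 hrab.1) (not_le.2 hrab.2)⟩

theorem hasLogOn_div_connectedComponentIn_compl {K : Set ℂ} (hKc : IsClosed K)
    (hK : IsPreconnected K) (ha : a ∈ K) (hb : b ∈ K) {w₀ : ℂ} (hw₀ : w₀ ∉ K) :
    HasLogOn (fun w => (w - a) / (w - b)) (connectedComponentIn Kᶜ w₀) := by
  have hΩ : IsOpen (connectedComponentIn Kᶜ w₀) := hKc.isOpen_compl.connectedComponentIn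
  have hΩK : connectedComponentIn Kᶜ w₀ ⊆ Kᶜ := connectedComponentIn_subset _ _
  refine .of_forall_isCompact hΩ
    (hΩ.isConnected_iff_isPathConnected.1 (isConnected_connectedComponentIn_iff.2 hw₀))
    (ContinuousOn.div (by fun_prop) (by fun_prop) fun w hw => sub_ne_zero.2 ?_)
    fun C hC hCc => hasLogOn_div_of_isPreconnected hK hCc.isClosed
      (disjoint_left.2 fun w hw => hΩK (hC hw)) ha hb
  exact fun hwb => hΩK hw (hwb ▸ hb)

end Eilenberg

section Curves

variable {X : Type*} [TopologicalSpace X]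

theorem exists_continuousOn_Ici_of_joinedIn {x : ℕ → X} {W : ℕ → Set X}
    (h : ∀ n, JoinedIn (W n) (x n) (x (n + 1))) :
    ∃ g : ℝ → X, ContinuousOn g (Ici 0) ∧ ∀ n : ℕ, MapsTo g (Icc n (n + 1)) (W n) := by
  let p : ∀ n, Path (x n) (x (n + 1)) := fun n => (h n).somePath
  let g : ℝ → X := fun t => (p ⌊t⌋₊).extend (t - ⌊t⌋₊)
  have hg : ∀ n : ℕ, EqOn g (fun t => (p n).extend (t - n)) (Icc n (n + 1)) := by
    intro n t ht
    rcases ht.2.lt_or_eq with hlt | rfl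
    · obtain rfl : ⌊t⌋₊ = n := (Nat.floor_eq_iff (n.cast_nonneg.trans ht.1)).2 ⟨ht.1, hlt⟩
      rfl
    · have hfloor : ⌊(n : ℝ) + 1⌋₊ = n + 1 := by exact_mod_cast Nat.floor_natCast (n + 1)
      simp [g, hfloor]
  have hcover : (Ici 0 : Set ℝ) ⊆ ⋃ n : ℕ, Icc (n : ℝ) (n + 1) := fun t ht =>
    mem_iUnion.2 ⟨⌊t⌋₊, Nat.floor_le ht, (Nat.lt_floor_add_one t).le⟩
  have hfin : LocallyFinite fun n : ℕ => Icc (n : ℝ) (n + 1) :=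
    (locallyFinite_Icc_of_tendsto (f := fun n : ℤ => (n : ℝ)) (g := fun n : ℤ => (n : ℝ) + 1)
      tendsto_intCast_atTop_atTop
      (tendsto_atBot_add_const_right _ _ (tendsto_intCast_atBot_iff.2 tendsto_id))).comp_injective
      (g := fun n : ℕ => (n : ℤ)) Nat.cast_injective
  refine ⟨g, .mono (hfin.continuousOn_iUnion (fun _ => isClosed_Icc) fun n => ?_) hcover,
    fun n t ht => ?_⟩
  · exact ContinuousOn.congr (by fun_prop) (hg n)
  · rw [hg n ht]
    have hmem : t - n ∈ Icc (0 : ℝ) 1 := ⟨sub_nonneg.2 ht.1, sub_le_iff_le_add'.2 ht.2⟩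
    beta_reduce
    rw [Path.extend_apply _ hmem]
    exact (h n).somePath_mem _

theorem exists_continuousOn_Ico_of_antitone {W : ℕ → Set X} (hW : Antitone W)
    (hpath : ∀ n, IsPathConnected (W n)) :
    ∃ γ : ℝ → X, ContinuousOn γ (Ico 0 1) ∧ ∀ n : ℕ, MapsTo γ (Ico (n / (n + 1)) 1) (W n) := by
  choose x hx using fun n => (hpath n).nonempty
  obtain ⟨g, hgc, hg⟩ := exists_continuousOn_Ici_of_joinedIn fun n =>
    (hpath n).joinedIn _ (hx n) _ (hW n.le_succ (hx (n + 1)))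
  have hpos : ∀ t ∈ Ico (0 : ℝ) 1, 0 ≤ t / (1 - t) := fun t ht =>
    div_nonneg ht.1 (sub_nonneg.2 ht.2.le)
  refine ⟨fun t => g (t / (1 - t)), hgc.comp (continuousOn_id.div (by fun_prop)
    fun t ht => (sub_pos.2 ht.2).ne') hpos, fun n t ht => ?_⟩
  have ht₀ : 0 ≤ t / (1 - t) := hpos t ⟨le_trans (by positivity) ht.1, ht.2⟩
  have hn : (n : ℝ) ≤ t / (1 - t) := by
    have hnt := (div_le_iff₀ (by positivity)).1 ht.1
    rw [le_div_iff₀ (sub_pos.2 ht.2)]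
    linarith
  exact hW (Nat.le_floor hn) (hg _ ⟨Nat.floor_le ht₀, (Nat.lt_floor_add_one _).le⟩)

theorem isCompact_insert_image_Ico {α : Type*} [LinearOrder α] [TopologicalSpace α] [T1Space α]
    [CompactIccSpace α] {γ : α → X} {a b : α} (hab : a ≤ b)
    (hγ : ContinuousOn γ (Ico a b)) {z : X} (hz : Tendsto γ (𝓝[<] b) (𝓝 z)) :
    IsCompact (insert z (γ '' Ico a b)) := by
  have himage : Function.update γ b z '' Icc a b = insert z (γ '' Ico a b) := by
    rw [← Ico_insert_right hab, image_insert_eq, Function.update_self,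
      image_congr fun t ht => Function.update_of_ne ht.2.ne z γ]
  rw [← himage]
  refine isCompact_Icc.image_of_continuousOn (continuousOn_update_iff.2 ?_)
  rw [Icc_sdiff_right]
  exact ⟨hγ, fun _ => hz.mono_left (nhdsWithin_mono _ Ico_subset_Iio_self)⟩

end Curves

section Access

variable {K : Set ℂ} {z : ℂ} {V : ℝ → Set ℂ}

theorem IsAccess.subset (hV : IsAccess K z V) {r : ℝ} (hr : 0 < r) : V r ⊆ ball z r \ K := by
  obtain ⟨x, -, hx⟩ := hV.1 r hr
  exact hx ▸ connectedComponentIn_subset _ _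

theorem IsAccess.isConnected (hV : IsAccess K z V) {r : ℝ} (hr : 0 < r) : IsConnected (V r) := by
  obtain ⟨x, hx, hVx⟩ := hV.1 r hr
  exact hVx ▸ isConnected_connectedComponentIn_iff.2 hx

theorem IsAccess.isPathConnected (hV : IsAccess K z V) (hK : IsClosed K) {r : ℝ} (hr : 0 < r) :
    IsPathConnected (V r) := by
  obtain ⟨x, -, hx⟩ := hV.1 r hr
  have hopen : IsOpen (V r) := hx ▸ (isOpen_ball.sdiff hK).connectedComponentIn
  exact hopen.isConnected_iff_isPathConnected.1 (hV.isConnected hr)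

theorem IsAccess.subset_connectedComponentIn (hV : IsAccess K z V) {r : ℝ} (hr : 0 < r) {w₀ : ℂ}
    (hw₀ : w₀ ∈ V r) : V r ⊆ connectedComponentIn Kᶜ w₀ :=
  (hV.isConnected hr).isPreconnected.subset_connectedComponentIn hw₀
    fun _ hw => (hV.subset hr hw).2

theorem IsAccess.mono (hV : IsAccess K z V) {r s : ℝ} (hr : 0 < r) (hrs : r ≤ s) : V r ⊆ V s :=
  hrs.eq_or_lt.elim (fun h => h ▸ Subset.rfl) (hV.2 r s hr)

theorem IsAccess.exists_isCurveInAccess (hV : IsAccess K z V) (hK : IsClosed K) :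
    ∃ γ : ℝ → ℂ, IsCurveInAccess K z V γ := by
  have hpos : ∀ n : ℕ, (0 : ℝ) < 1 / (n + 1) := fun n => Nat.one_div_pos_of_nat
  obtain ⟨γ, hγ, hγV⟩ := exists_continuousOn_Ico_of_antitone
    (W := fun n : ℕ => V (1 / (n + 1)))
    (fun m n hmn => hV.mono (hpos n) (Nat.one_div_le_one_div hmn))
    fun n => hV.isPathConnected hK (hpos n)
  have hstart : ∀ t ∈ Ico (0 : ℝ) 1, γ t ∈ V (1 / ((0 : ℕ) + 1)) := fun t ht =>
    hγV 0 (by simpa using ht)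
  have hvisit : ∀ r : ℝ, 0 < r → ∃ t₀ ∈ Ico (0 : ℝ) 1, ∀ t, t₀ ≤ t → t < 1 → γ t ∈ V r := by
    intro r hr
    obtain ⟨n, hn⟩ := exists_nat_one_div_lt hr
    refine ⟨n / (n + 1), ⟨by positivity, (div_lt_one (by positivity)).2 (lt_add_one _)⟩,
      fun t ht ht₁ => hV.2 _ _ (hpos n) hn (hγV n ⟨ht, ht₁⟩)⟩
  refine ⟨γ, hγ, fun t ht => (hV.subset (hpos 0) (hstart t ht)).2,
    Metric.tendsto_nhds.2 fun r hr => ?_, fun t ht => ⟨_, hpos 0, hstart t ht⟩, hvisit⟩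
  obtain ⟨t₀, ht₀, h⟩ := hvisit r hr
  filter_upwards [Ico_mem_nhdsLT ht₀.2] with t ht
  exact (hV.subset hr (h t ht.1 ht.2)).1

variable {γ : ℝ → ℂ}

theorem IsCurveInAccess.image_subset (hγ : IsCurveInAccess K z V γ) (hV : IsAccess K z V)
    {r : ℝ} (hr : 0 < r) {w₀ : ℂ} (hw₀ : w₀ ∈ V r) :
    γ '' Ico 0 1 ⊆ connectedComponentIn Kᶜ w₀ := by
  obtain ⟨hcont, hγK, -, -, hvisit⟩ := hγ
  obtain ⟨t₀, ht₀, h⟩ := hvisit r hr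
  rw [connectedComponentIn_eq (hV.subset_connectedComponentIn hr hw₀ (h t₀ le_rfl ht₀.2))]
  exact (isPreconnected_Ico.image γ hcont).subset_connectedComponentIn ⟨t₀, ht₀, rfl⟩
    (image_subset_iff.2 hγK)

theorem IsCurveInAccess.nhdsWithin_image_le (hγ : IsCurveInAccess K z V γ)
    (hz : z ∉ γ '' Ico 0 1) {r : ℝ} (hr : 0 < r) : 𝓝[γ '' Ico 0 1] z ≤ 𝓝[V r] z := by
  obtain ⟨hcont, -, -, -, hvisit⟩ := hγ
  obtain ⟨t₀, ht₀, h⟩ := hvisit r hr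
  have hsub : Icc 0 t₀ ⊆ Ico (0 : ℝ) 1 := Icc_subset_Ico_right ht₀.2
  have hclosed : IsClosed (γ '' Icc 0 t₀) :=
    (isCompact_Icc.image_of_continuousOn (hcont.mono hsub)).isClosed
  refine nhdsWithin_le_iff.2 <| mem_nhdsWithin.2 ⟨_, hclosed.isOpen_compl,
    notMem_subset (image_mono hsub) hz, ?_⟩
  rintro _ ⟨hw, t, ht, rfl⟩
  exact h t (not_lt.1 fun hlt => hw ⟨t, ⟨ht.1, hlt.le⟩, rfl⟩) ht.2

variable {γ₁ γ₂ : ℝ → ℂ}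

theorem IsAccess.hasLogOn_div_insert_union (hV : IsAccess K z V) (hKc : IsClosed K)
    (hK : IsPreconnected K) (h₁ : IsCurveInAccess K z V γ₁) (h₂ : IsCurveInAccess K z V γ₂)
    {a b : ℂ} (ha : a ∈ K \ {z}) (hb : b ∈ K \ {z}) :
    HasLogOn (fun w => (w - a) / (w - b)) (insert z (γ₁ '' Ico 0 1 ∪ γ₂ '' Ico 0 1)) := by
  obtain ⟨r, hr, hball⟩ := exists_hasLogOn_div_closedBall ha.2 hb.2
  obtain ⟨w₀, hw₀⟩ := (hV.isConnected hr).nonempty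
  have hΩ := hasLogOn_div_connectedComponentIn_compl hKc hK ha.1 hb.1 (hV.subset hr hw₀).2
  have hTΩ : γ₁ '' Ico 0 1 ∪ γ₂ '' Ico 0 1 ⊆ connectedComponentIn Kᶜ w₀ :=
    union_subset (h₁.image_subset hV hr hw₀) (h₂.image_subset hV hr hw₀)
  by_cases hzT : z ∈ γ₁ '' Ico 0 1 ∪ γ₂ '' Ico 0 1
  · rw [insert_eq_of_mem hzT]
    exact hΩ.mono hTΩ
  have hVball : V r ⊆ closedBall z r := fun w hw => ball_subset_closedBall (hV.subset hr hw).1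
  have hTV : 𝓝[γ₁ '' Ico 0 1 ∪ γ₂ '' Ico 0 1] z ≤ 𝓝[V r] z := by
    rw [nhdsWithin_union]
    exact sup_le (h₁.nhdsWithin_image_le (fun h => hzT (.inl h)) hr)
      (h₂.nhdsWithin_image_le (fun h => hzT (.inr h)) hr)
  exact hΩ.insert hball (closedBall_mem_nhds z hr) (hV.isConnected hr)
    (hV.subset_connectedComponentIn hr hw₀) hVball hTΩ hzT hTV

theorem IsAccess.connectedComponentIn_compl_curves_eq (hV : IsAccess K z V) (hKc : IsClosed K)
    (hK : IsPreconnected K) (h₁ : IsCurveInAccess K z V γ₁) (h₂ : IsCurveInAccess K z V γ₂)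
    {a b : ℂ} (ha : a ∈ K \ {z}) (hb : b ∈ K \ {z}) :
    connectedComponentIn (insert z (γ₁ '' Ico 0 1 ∪ γ₂ '' Ico 0 1))ᶜ a =
      connectedComponentIn (insert z (γ₁ '' Ico 0 1 ∪ γ₂ '' Ico 0 1))ᶜ b := by
  have hcompact : IsCompact (insert z (γ₁ '' Ico 0 1 ∪ γ₂ '' Ico 0 1)) := by
    rw [insert_union_distrib]
    exact (isCompact_insert_image_Ico zero_le_one h₁.1 h₁.2.2.1).union
      (isCompact_insert_image_Ico zero_le_one h₂.1 h₂.2.2.1)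
  have hnot : ∀ x ∈ K \ {z}, x ∉ insert z (γ₁ '' Ico 0 1 ∪ γ₂ '' Ico 0 1) := by
    rintro _ hx (rfl | ⟨t, ht, rfl⟩ | ⟨t, ht, rfl⟩)
    · exact hx.2 rfl
    · exact h₁.2.1 t ht hx.1
    · exact h₂.2.1 t ht hx.1
  exact connectedComponentIn_compl_eq_of_hasLogOn hcompact (hnot a ha) (hnot b hb)
    (hV.hasLogOn_div_insert_union hKc hK h₁ h₂ ha hb)

end Access

theorem access_curve_exists_and_no_separation_general {K : Set ℂ} (hK : IsClosed K)
    (hconn : IsPreconnected K) {z : ℂ} {V : ℝ → Set ℂ} (hV : IsAccess K z V) :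
    (∃ γ : ℝ → ℂ, IsCurveInAccess K z V γ) ∧
    ∀ γ₁ γ₂ : ℝ → ℂ, IsCurveInAccess K z V γ₁ → IsCurveInAccess K z V γ₂ →
      ∀ a ∈ K \ {z}, ∀ b ∈ K \ {z},
        connectedComponentIn (γ₁ '' Ico 0 1 ∪ γ₂ '' Ico 0 1 ∪ {z})ᶜ a =
          connectedComponentIn (γ₁ '' Ico 0 1 ∪ γ₂ '' Ico 0 1 ∪ {z})ᶜ b := by
  refine ⟨hV.exists_isCurveInAccess hK, fun γ₁ γ₂ h₁ h₂ a ha b hb => ?_⟩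
  rw [union_singleton]
  exact hV.connectedComponentIn_compl_curves_eq hK hconn h₁ h₂ ha hb

/-- For every access to a boundary point `z` of a compact, connected, full set `K ⊂ ℂ`
there is a curve in `ℂ ∖ K` landing at `z`, running entirely through the domains of the
access and visiting all of them; moreover two such curves, together with `z`, never
separate `K`: any two points of `K ∖ {z}` lie in the same connected component of the
complement of the union of the two curves and `{z}`. -/
theorem access_curve_exists_and_no_separation (K : Set ℂ)
    (hK : IsCompact K) (hconn : IsConnected K)
    (hfull : ∀ w ∉ K, ¬ Bornology.IsBounded (connectedComponentIn Kᶜ w))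
    (z : ℂ) (hz : z ∈ frontier K)
    (V : ℝ → Set ℂ) (hV : IsAccess K z V) :
    (∃ γ : ℝ → ℂ, IsCurveInAccess K z V γ) ∧
    ∀ γ₁ γ₂ : ℝ → ℂ, IsCurveInAccess K z V γ₁ → IsCurveInAccess K z V γ₂ →
      ∀ a ∈ K \ {z}, ∀ b ∈ K \ {z},
        connectedComponentIn (γ₁ '' Set.Ico 0 1 ∪ γ₂ '' Set.Ico 0 1 ∪ {z})ᶜ a =
          connectedComponentIn (γ₁ '' Set.Ico 0 1 ∪ γ₂ '' Set.Ico 0 1 ∪ {z})ᶜ b := by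
  exact access_curve_exists_and_no_separation_general hK.isClosed hconn.isPreconnected hV
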